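/- Let n, p ∈ ℕ with n ≥ 2 and p ≥ 2, and let A₁, A₂, …, A_p ∈ GL_n(ℂ) be matrices having n−1 common columns (there exists an index k such that all columns with index ≠ k coincide across the family). Assume ⋂_{i=1}^{p} spec(A_i) = ∅, i.e. the A_i have no common eigenvalue. Then there exists a single u ∈ GL_n(ℂ) such that for every i ∈ {1,…,p}, u A_i u⁻¹ is the companion matrix of the characteristic polynomial of A_i. -/

import Mathlib

/-!
Two matrices sharing all columns but the `k`-th agree on the hyperplane `φ = 0`, where `φ` is the
`k`-th coordinate. Let `N` be the space of all `v` with `φ (A₀ ^ j v) = 0` for every `j`. It is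
`A₀`-invariant and lies in this hyperplane, so every `A i` restricts to the same endomorphism of
`N`. Its minimal polynomial divides every characteristic polynomial; as these have no common
factor, it is constant, and `N = 0`. By duality there is a vector `v` with `φ (A₀ ^ j v) = 0` for
`j < n - 1` and `φ (A₀ ^ (n - 1) v) = 1`. The vectors `v, A₀ v, …, A₀ ^ (n - 1) v` form a basis;
all but the last lie in the hyperplane, so they are also `v, A i v, …, (A i) ^ (n - 1) v` for
every `i`. In this basis every `A i` is a companion matrix, by Cayley–Hamilton.
-/

/-- `μ ∈ ℂ` is an eigenvalue of the matrix `A`, for the standard action on `ℂⁿ`. -/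
def HasEigen {n : ℕ} (A : Matrix (Fin n) (Fin n) ℂ) (μ : ℂ) : Prop :=
  ∃ v : Fin n → ℂ, v ≠ 0 ∧ A.mulVec v = μ • v

/-- The companion matrix of the monic polynomial `Xⁿ + c_{n−1} X^{n−1} + ⋯ + c₀`:
ones on the subdiagonal, last column `(−c₀, …, −c_{n−1})ᵀ`, zeros elsewhere. -/
def companionMatrix {n : ℕ} (c : Fin n → ℂ) : Matrix (Fin n) (Fin n) ℂ :=
  Matrix.of fun i j =>
    if (j : ℕ) = n - 1 then -c i else if (i : ℕ) = (j : ℕ) + 1 then 1 else 0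

open Matrix Polynomial

section Restriction

variable {K V : Type*} [Field K] [AddCommGroup V] [Module K V] {f g : Module.End K V}
  {N : Submodule K V}

theorem aeval_restrict_apply_of_eqOn (hf : ∀ v ∈ N, f v ∈ N) (hgf : Set.EqOn g f N)
    (q : K[X]) (v : N) : (aeval (f.restrict hf) q v : V) = aeval g q v := by
  induction q using Polynomial.induction_on generalizing v with
  | C a => simp [Module.algebraMap_end_apply]
  | add p q hp hq => simp [hp, hq]
  | monomial m a ih =>
    rw [pow_succ, ← mul_assoc, map_mul _ (C a * X ^ m), map_mul _ (C a * X ^ m), aeval_X,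
      aeval_X, Module.End.mul_apply, Module.End.mul_apply, ih, hgf v.2,
      LinearMap.coe_restrict_apply]

theorem minpoly_restrict_dvd_of_eqOn (hf : ∀ v ∈ N, f v ∈ N) (hgf : Set.EqOn g f N)
    {q : K[X]} (hq : aeval g q = 0) : minpoly K (f.restrict hf) ∣ q := by
  refine minpoly.dvd K _ (LinearMap.ext fun v => Subtype.ext ?_)
  rw [aeval_restrict_apply_of_eqOn hf hgf, hq]
  rfl

theorem eq_bot_of_eqOn_of_coprime_charpoly {ι : Type*} [FiniteDimensional K V]
    {f : ι → Module.End K V} (hcop : ∀ q : K[X], (∀ i, q ∣ (f i).charpoly) → IsUnit q) {i₀ : ι}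
    (hinv : ∀ v ∈ N, f i₀ v ∈ N) (hagree : ∀ i, Set.EqOn (f i) (f i₀) N) : N = ⊥ := by
  by_contra hN
  have : Nontrivial N := Submodule.nontrivial_iff_ne_bot.2 hN
  exact minpoly.not_isUnit K ((f i₀).restrict hinv) <| hcop _ fun i =>
    minpoly_restrict_dvd_of_eqOn hinv (hagree i) (f i).aeval_self_charpoly

end Restriction

section Matrices

variable {R m : Type*} [CommRing R] [Fintype m] [DecidableEq m] {n : ℕ}

/-- The companion matrix of the monic polynomial `Xⁿ + c_{n−1} X^{n−1} + ⋯ + c₀`, as in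
`companionMatrix` but over an arbitrary commutative ring. -/
def companion (c : Fin n → R) : Matrix (Fin n) (Fin n) R :=
  of fun i j => if (j : ℕ) = n - 1 then -c i else if (i : ℕ) = (j : ℕ) + 1 then 1 else 0

/-- The Krylov matrix of `A` and `v`: its columns are `v, A v, …, A ^ (n - 1) v`. -/
def krylov (A : Matrix m m R) (v : m → R) (n : ℕ) : Matrix m (Fin n) R :=
  of fun i j => (A ^ (j : ℕ) *ᵥ v) i

/-- The observability matrix of control theory for the matrix `A` and the linear form given by the
row vector `φ`: its rows are `φ, φ A, …, φ A ^ (n - 1)`. -/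
def observability (A : Matrix m m R) (φ : m → R) (n : ℕ) : Matrix (Fin n) m R :=
  of fun i => φ ᵥ* A ^ (i : ℕ)

theorem krylov_mulVec (A : Matrix m m R) (v : m → R) (c : Fin n → R) :
    krylov A v n *ᵥ c = ∑ j, c j • A ^ (j : ℕ) *ᵥ v := by
  ext i
  simp [krylov, mulVec, dotProduct, mul_comm]

theorem observability_mulVec (A : Matrix m m R) (φ v : m → R) (j : Fin n) :
    (observability A φ n *ᵥ v) j = φ ⬝ᵥ A ^ (j : ℕ) *ᵥ v :=
  (dotProduct_mulVec _ _ _).symm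

theorem observability_mul_krylov (A : Matrix m m R) (φ v : m → R) (i j : Fin n) :
    (observability A φ n * krylov A v n) i j = φ ⬝ᵥ A ^ ((i : ℕ) + j) *ᵥ v := by
  rw [pow_add, ← mulVec_mulVec]
  exact observability_mulVec A φ _ i

theorem pow_card_eq_neg_sum_charpoly_coeff (A : Matrix (Fin n) (Fin n) R) :
    A ^ n = -∑ j : Fin n, A.charpoly.coeff j • A ^ (j : ℕ) := by
  nontriviality R
  have hdeg : A.charpoly.natDegree = n := by simp [charpoly_natDegree_eq_dim]
  have hlead : A.charpoly.coeff n = 1 := by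
    simpa only [hdeg] using A.charpoly_monic.coeff_natDegree
  have hCH := aeval_self_charpoly A
  rw [aeval_eq_sum_range, hdeg, Finset.sum_range_succ, hlead, one_smul,
    ← Fin.sum_univ_eq_sum_range (fun j => A.charpoly.coeff j • A ^ j)] at hCH
  exact eq_neg_of_add_eq_zero_right hCH

theorem dotProduct_eq_zero_of_observability_mulVec_eq_zero {A : Matrix (Fin n) (Fin n) R}
    {φ v : Fin n → R} (hv : observability A φ n *ᵥ v = 0) : φ ⬝ᵥ v = 0 := by
  obtain rfl | hn := n.eq_zero_or_pos
  · exact dotProduct_of_isEmpty φ v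
  · simpa [observability_mulVec] using congrFun hv ⟨0, hn⟩

theorem observability_mulVec_mulVec_eq_zero {A : Matrix (Fin n) (Fin n) R} {φ v : Fin n → R}
    (hv : observability A φ n *ᵥ v = 0) : observability A φ n *ᵥ (A *ᵥ v) = 0 := by
  have hrow (j : Fin n) : φ ⬝ᵥ A ^ (j : ℕ) *ᵥ v = 0 :=
    (observability_mulVec A φ v j).symm.trans (congrFun hv j)
  ext j
  rw [observability_mulVec, mulVec_mulVec, ← pow_succ, Pi.zero_apply]
  obtain hj | hj : (j : ℕ) + 1 < n ∨ (j : ℕ) + 1 = n := by omega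
  · exact hrow ⟨j + 1, hj⟩
  · rw [hj, pow_card_eq_neg_sum_charpoly_coeff, neg_mulVec, sum_mulVec, dotProduct_neg,
      dotProduct_sum, neg_eq_zero]
    exact Finset.sum_eq_zero fun i _ => by rw [smul_mulVec, dotProduct_smul, hrow, smul_zero]

theorem mul_krylov_eq_krylov_mul_companion {A : Matrix m m R} {v : m → R} {c : Fin n → R}
    (h : A ^ n *ᵥ v = -∑ j, c j • A ^ (j : ℕ) *ᵥ v) :
    A * krylov A v n = krylov A v n * companion c := by
  ext i j
  have hleft : (A * krylov A v n) i j = (A ^ ((j : ℕ) + 1) *ᵥ v) i := by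
    rw [pow_succ', ← mulVec_mulVec]
    rfl
  have hright : (krylov A v n * companion c) i j = (krylov A v n *ᵥ (companion c).col j) i := rfl
  rw [hleft, hright]
  by_cases hj : (j : ℕ) = n - 1
  · have hcol : (companion c).col j = -c := by
      ext a
      simp [companion, hj]
    rw [hcol, mulVec_neg, krylov_mulVec, ← h, show (j : ℕ) + 1 = n by omega]
  · have hj' : (j : ℕ) + 1 < n := by omega
    have hcol : (companion c).col j = Pi.single ⟨j + 1, hj'⟩ 1 := by
      ext a
      simp [companion, hj, Pi.single_apply, Fin.ext_iff]
    rw [hcol, mulVec_single_one]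
    rfl

theorem mul_krylov_charpoly (A : Matrix (Fin n) (Fin n) R) (v : Fin n → R) :
    A * krylov A v n = krylov A v n * companion fun j => A.charpoly.coeff j := by
  refine mul_krylov_eq_krylov_mul_companion ?_
  simp only [pow_card_eq_neg_sum_charpoly_coeff A, neg_mulVec, sum_mulVec, smul_mulVec]

theorem isUnit_of_antitriangular {H : Matrix (Fin n) (Fin n) R}
    (hzero : ∀ i j : Fin n, (i : ℕ) + j + 1 < n → H i j = 0)
    (hone : ∀ i j : Fin n, (i : ℕ) + j + 1 = n → H i j = 1) : IsUnit H := by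
  have htri : (H.submatrix Fin.revPerm (Equiv.refl _)).IsUpperTriangular := by
    intro i j (hij : j < i)
    exact hzero _ _ (by simp only [Fin.revPerm_apply, Fin.val_rev, Equiv.refl_apply]; omega)
  have hdet : (H.submatrix Fin.revPerm (Equiv.refl _)).det = 1 := by
    rw [det_of_isUpperTriangular htri]
    refine Finset.prod_eq_one fun i _ => hone _ _ ?_
    simp only [Fin.revPerm_apply, Fin.val_rev, Equiv.refl_apply]
    omega
  rw [← isUnit_submatrix_equiv Fin.revPerm (Equiv.refl _), isUnit_iff_isUnit_det, hdet]
  exact isUnit_one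

theorem isUnit_krylov {A : Matrix (Fin n) (Fin n) R} {φ v : Fin n → R}
    (hzero : ∀ j : ℕ, j + 1 < n → φ ⬝ᵥ A ^ j *ᵥ v = 0)
    (hone : ∀ j : ℕ, j + 1 = n → φ ⬝ᵥ A ^ j *ᵥ v = 1) : IsUnit (krylov A v n) := by
  have hHankel : IsUnit (observability A φ n * krylov A v n) :=
    isUnit_of_antitriangular
      (fun i j hij => (observability_mul_krylov A φ v i j).trans (hzero _ hij))
      (fun i j hij => (observability_mul_krylov A φ v i j).trans (hone _ hij))
  rw [isUnit_iff_isUnit_det, det_mul] at hHankel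
  exact (isUnit_iff_isUnit_det _).2 (isUnit_of_mul_isUnit_right hHankel)

theorem exists_dotProduct_pow_mulVec_eq_zero_and_eq_one {A : Matrix (Fin n) (Fin n) R}
    {φ : Fin n → R} (hO : IsUnit (observability A φ n)) :
    ∃ v : Fin n → R, (∀ j : ℕ, j + 1 < n → φ ⬝ᵥ A ^ j *ᵥ v = 0) ∧
      ∀ j : ℕ, j + 1 = n → φ ⬝ᵥ A ^ j *ᵥ v = 1 := by
  obtain ⟨v, hv⟩ := mulVec_surjective_iff_isUnit.2 hO
    fun j : Fin n => if (j : ℕ) + 1 = n then 1 else 0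
  have hrow (j : ℕ) (hj : j < n) : φ ⬝ᵥ A ^ j *ᵥ v = if j + 1 = n then 1 else 0 :=
    (observability_mulVec A φ v ⟨j, hj⟩).symm.trans (congrFun hv ⟨j, hj⟩)
  refine ⟨v, fun j hj => ?_, fun j hj => ?_⟩
  · rw [hrow j (by omega), if_neg hj.ne]
  · rw [hrow j (by omega), if_pos hj]

theorem krylov_eq_of_mulVec_eq {A B : Matrix m m R} {φ v : m → R}
    (hAB : ∀ w, φ ⬝ᵥ w = 0 → A *ᵥ w = B *ᵥ w)
    (hzero : ∀ j : ℕ, j + 1 < n → φ ⬝ᵥ B ^ j *ᵥ v = 0) : krylov A v n = krylov B v n := by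
  have hpow (j : ℕ) (hj : j < n) : A ^ j *ᵥ v = B ^ j *ᵥ v := by
    induction j with
    | zero => simp only [pow_zero]
    | succ j ih =>
      rw [pow_succ', pow_succ', ← mulVec_mulVec, ← mulVec_mulVec, ih (by omega),
        hAB _ (hzero j hj)]
  ext i j
  exact congrFun (hpow j j.isLt) i

theorem mulVec_eq_of_forall_ne_col_eq {A B : Matrix m m R} {k : m}
    (h : ∀ l, l ≠ k → ∀ a, A a l = B a l) {v : m → R} (hv : Pi.single k 1 ⬝ᵥ v = 0) :
    A *ᵥ v = B *ᵥ v := by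
  rw [single_one_dotProduct] at hv
  ext a
  refine Finset.sum_congr rfl fun l _ => ?_
  obtain rfl | hl := eq_or_ne l k
  · rw [hv, mul_zero, mul_zero]
  · exact congrArg (· * v l) (h l hl a)

end Matrices

theorem isUnit_observability_of_coprime_charpoly {K ι : Type*} [Field K] {n : ℕ}
    {A : ι → Matrix (Fin n) (Fin n) K} {φ : Fin n → K}
    (hagree : ∀ i j v, φ ⬝ᵥ v = 0 → A i *ᵥ v = A j *ᵥ v)
    (hcop : ∀ q : K[X], (∀ i, q ∣ (A i).charpoly) → IsUnit q) (i₀ : ι) :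
    IsUnit (observability (A i₀) φ n) := by
  have hker : LinearMap.ker (observability (A i₀) φ n).mulVecLin = ⊥ :=
    eq_bot_of_eqOn_of_coprime_charpoly (f := fun i => (A i).toLin') (i₀ := i₀)
      (by simpa only [charpoly_toLin'] using hcop)
      (fun _ hv => observability_mulVec_mulVec_eq_zero hv)
      (fun i _ hv => hagree i i₀ _ (dotProduct_eq_zero_of_observability_mulVec_eq_zero hv))
  exact mulVec_injective_iff_isUnit.1 (LinearMap.ker_eq_bot.1 hker)

theorem hasEigen_of_isRoot_charpoly {n : ℕ} {A : Matrix (Fin n) (Fin n) ℂ} {μ : ℂ}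
    (hμ : A.charpoly.IsRoot μ) : HasEigen A μ := by
  rw [IsRoot, eval_charpoly] at hμ
  obtain ⟨v, hv, hAv⟩ := exists_mulVec_eq_zero_iff.2 hμ
  refine ⟨v, hv, ?_⟩
  rw [sub_mulVec, sub_eq_zero, scalar_apply, ← smul_one_eq_diagonal, smul_mulVec, one_mulVec] at hAv
  exact hAv.symm

theorem isUnit_of_forall_dvd_charpoly_of_no_common_eigen {ι : Type*} {n : ℕ}
    {A : ι → Matrix (Fin n) (Fin n) ℂ} (heig : ¬ ∃ μ : ℂ, ∀ i, HasEigen (A i) μ) (q : ℂ[X])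
    (hq : ∀ i, q ∣ (A i).charpoly) : IsUnit q := by
  by_contra hunit
  obtain ⟨μ, hμ⟩ := IsAlgClosed.exists_root q fun hdeg => hunit (isUnit_iff_degree_eq_zero.2 hdeg)
  exact heig ⟨μ, fun i => hasEigen_of_isRoot_charpoly (hμ.dvd (hq i))⟩

theorem levelt_stmt12_general {K ι : Type*} [Field K] {n : ℕ} (A : ι → Matrix (Fin n) (Fin n) K)
    (φ : Fin n → K) (hagree : ∀ i j v, φ ⬝ᵥ v = 0 → A i *ᵥ v = A j *ᵥ v)
    (hcop : ∀ q : K[X], (∀ i, q ∣ (A i).charpoly) → IsUnit q) :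
    ∃ u : Matrix (Fin n) (Fin n) K, IsUnit u.det ∧
      ∀ i, u * A i * u⁻¹ = companion fun j => (A i).charpoly.coeff j := by
  obtain _ | ⟨⟨i₀⟩⟩ := isEmpty_or_nonempty ι
  · exact ⟨1, by simp, isEmptyElim⟩
  have hO := isUnit_observability_of_coprime_charpoly hagree hcop i₀
  obtain ⟨v, hzero, hone⟩ := exists_dotProduct_pow_mulVec_eq_zero_and_eq_one hO
  have hdet := (isUnit_iff_isUnit_det _).1 (isUnit_krylov hzero hone)
  refine ⟨(krylov (A i₀) v n)⁻¹, isUnit_nonsing_inv_det _ hdet, fun i => ?_⟩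
  have hK : krylov (A i) v n = krylov (A i₀) v n := krylov_eq_of_mulVec_eq (hagree i i₀) hzero
  have hcomp : A i * krylov (A i₀) v n =
      krylov (A i₀) v n * companion fun j => (A i).charpoly.coeff j := by
    rw [← hK, mul_krylov_charpoly]
  rw [nonsing_inv_nonsing_inv _ hdet, mul_assoc, hcomp, nonsing_inv_mul_cancel_left _ _ hdet]

/-- If `A₁,…,A_p ∈ GLₙ(ℂ)` (`n, p ≥ 2`) have `n−1` common columns and no
common eigenvalue, then a single conjugation brings every `A i` to the companion matrix of
its characteristic polynomial. -/
theorem levelt_stmt12 (n p : ℕ) (hn : 2 ≤ n) (hp : 2 ≤ p)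
    (A : Fin p → Matrix (Fin n) (Fin n) ℂ) (hA : ∀ i, IsUnit (A i).det)
    (hc : ∃ k : Fin n, ∀ i i' : Fin p, ∀ l : Fin n, l ≠ k → ∀ m : Fin n,
            A i m l = A i' m l)
    (heig : ¬ ∃ μ : ℂ, ∀ i, HasEigen (A i) μ) :
    ∃ u : Matrix (Fin n) (Fin n) ℂ, IsUnit u.det ∧
      ∀ i, u * A i * u⁻¹ = companionMatrix (fun k : Fin n => (A i).charpoly.coeff k) := by
  obtain ⟨k, hk⟩ := hc
  exact levelt_stmt12_general A (Pi.single k 1)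
    (fun i j _ => mulVec_eq_of_forall_ne_col_eq (hk i j))
    (isUnit_of_forall_dvd_charpoly_of_no_common_eigen heig)
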